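/- Fix γ ∈ (0,1) and θ ∈ (0,1), and define J : (0,1) → ℝ by J(π) = (1−θ)·log((1−θ)/(1−π)) + θ·log(θ/π) + log(1 + (γ−1)(1−π)). Then the point π* = γθ/(1 + θ(γ−1)) satisfies 0 < π* < 1, π* is the unique critical point of J on (0,1) (the unique π with J′(π) = 0), and J attains its global minimum over (0,1) at π*, i.e., J(π*) ≤ J(π) for all π ∈ (0,1). -/

import Mathlib

open Set

/-- The Gibbs inequality for Bernoulli distributions. -/
theorem bernoulli_log_le {θ q : ℝ} (hθ : θ ∈ Ioo (0 : ℝ) 1) (hq : q ∈ Ioo (0 : ℝ) 1) :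
    (1 - θ) * Real.log (1 - q) + θ * Real.log q
      ≤ (1 - θ) * Real.log (1 - θ) + θ * Real.log θ := by
  obtain ⟨hθ0, hθ1⟩ := hθ
  obtain ⟨hq0, hq1⟩ := hq
  have mul_log_sub_le : ∀ {a b : ℝ}, 0 < a → 0 < b →
      a * Real.log b - a * Real.log a ≤ b - a := by
    intro a b ha hb
    have h := mul_le_mul_of_nonneg_left (Real.log_le_sub_one_of_pos (div_pos hb ha)) ha.le
    rw [Real.log_div hb.ne' ha.ne', mul_sub, mul_sub, mul_div_cancel₀ _ ha.ne'] at h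
    linarith
  linarith [mul_log_sub_le hθ0 hq0, mul_log_sub_le (sub_pos.2 hθ1) (sub_pos.2 hq1)]

/-- For `γ, θ ∈ (0,1)` and
`J(π) = (1−θ)·log((1−θ)/(1−π)) + θ·log(θ/π) + log(1 + (γ−1)(1−π))`,
the point `π* = γθ/(1 + θ(γ−1))` lies in `(0,1)`, is the unique critical point of `J`
on `(0,1)`, and is a global minimizer of `J` over `(0,1)`. -/
theorem flattening_hyperprior_minimizer (γ θ : ℝ) (hγ : γ ∈ Ioo (0 : ℝ) 1)
    (hθ : θ ∈ Ioo (0 : ℝ) 1)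
    (J : ℝ → ℝ)
    (hJ : ∀ π : ℝ, J π = (1 - θ) * Real.log ((1 - θ) / (1 - π))
      + θ * Real.log (θ / π) + Real.log (1 + (γ - 1) * (1 - π)))
    (πs : ℝ) (hπs : πs = γ * θ / (1 + θ * (γ - 1))) :
    0 < πs ∧ πs < 1 ∧ HasDerivAt J 0 πs ∧
      (∀ π ∈ Ioo (0 : ℝ) 1, deriv J π = 0 → π = πs) ∧
      (∀ π ∈ Ioo (0 : ℝ) 1, J πs ≤ J π) := by
  obtain ⟨hγ0, hγ1⟩ := hγ
  have hθ' := hθ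
  obtain ⟨hθ0, hθ1⟩ := hθ
  have hE : 0 < 1 + θ * (γ - 1) := by nlinarith
  have hs0 : 0 < πs := by rw [hπs]; positivity
  have hs1 : πs < 1 := by rw [hπs, div_lt_one hE]; nlinarith
  have hsE : πs * (1 + θ * (γ - 1)) = γ * θ := by rw [hπs, div_mul_cancel₀ _ hE.ne']
  have hD : ∀ π ∈ Ioo (0 : ℝ) 1, 0 < 1 + (γ - 1) * (1 - π) := by
    rintro π ⟨h0, h1⟩
    nlinarith [mul_pos (sub_pos.2 hγ1) h0]
  have hJ_log : ∀ π ∈ Ioo (0 : ℝ) 1, J π = (1 - θ) * (Real.log (1 - θ) - Real.log (1 - π))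
      + θ * (Real.log θ - Real.log π) + Real.log (1 + (γ - 1) * (1 - π)) := by
    rintro π ⟨h0, h1⟩
    rw [hJ, Real.log_div (sub_pos.2 hθ1).ne' (sub_pos.2 h1).ne', Real.log_div hθ0.ne' h0.ne']
  have hderiv : ∀ π ∈ Ioo (0 : ℝ) 1, HasDerivAt J
      ((π * (1 + θ * (γ - 1)) - γ * θ) / (π * (1 - π) * (1 + (γ - 1) * (1 - π)))) π := by
    intro π hπ
    have hDπ := (hD π hπ).ne'
    have h0 := hπ.1.ne'
    have h1 := (sub_pos.2 hπ.2).ne'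
    have hsub : HasDerivAt (fun x : ℝ => 1 - x) (-1) π := (hasDerivAt_id π).const_sub 1
    have h := ((((hsub.log h1).const_sub (Real.log (1 - θ))).const_mul (1 - θ)).add
      (((Real.hasDerivAt_log h0).const_sub (Real.log θ)).const_mul θ)).add
      (((hsub.const_mul (γ - 1)).const_add 1).log hDπ)
    refine (h.congr_of_eventuallyEq ?_).congr_deriv ?_
    · filter_upwards [isOpen_Ioo.mem_nhds hπ] with x hx using hJ_log x hx
    · generalize hd : 1 + (γ - 1) * (1 - π) = d at hDπ ⊢
      field_simp
      rw [← hd]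
      ring
  refine ⟨hs0, hs1, ?_, ?_, ?_⟩
  · simpa [hsE] using hderiv πs ⟨hs0, hs1⟩
  · intro π hπ h
    rw [(hderiv π hπ).deriv, div_eq_zero_iff] at h
    have hden := (mul_pos (mul_pos hπ.1 (sub_pos.2 hπ.2)) (hD π hπ)).ne'
    rw [hπs, eq_div_iff hE.ne']
    linarith [h.resolve_right hden]
  · -- In the coordinate `q = π / (1 + (γ - 1)(1 - π))`, `J` is a divergence plus a constant.
    have key : ∀ π ∈ Ioo (0 : ℝ) 1, ∃ q ∈ Ioo (0 : ℝ) 1,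
        q = π / (1 + (γ - 1) * (1 - π)) ∧
        J π = (1 - θ) * Real.log (1 - θ) + θ * Real.log θ
          - ((1 - θ) * Real.log (1 - q) + θ * Real.log q) + (1 - θ) * Real.log γ := by
      intro π hπ
      have hDπ := hD π hπ
      have h1 := sub_pos.2 hπ.2
      have hq : 1 - π / (1 + (γ - 1) * (1 - π)) = γ * (1 - π) / (1 + (γ - 1) * (1 - π)) := by
        field_simp
        ring
      refine ⟨_, ⟨div_pos hπ.1 hDπ, ?_⟩, rfl, ?_⟩
      · rw [← sub_pos, hq]
        positivity
      · rw [hJ_log π hπ, hq, Real.log_div (mul_pos hγ0 h1).ne' hDπ.ne',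
          Real.log_mul hγ0.ne' h1.ne', Real.log_div hπ.1.ne' hDπ.ne']
        ring
    intro π hπ
    obtain ⟨q, hq, -, hJq⟩ := key π hπ
    obtain ⟨qs, -, hqs, hJs⟩ := key πs ⟨hs0, hs1⟩
    have hqsθ : qs = θ := by
      rw [hqs, div_eq_iff (hD πs ⟨hs0, hs1⟩).ne']
      linarith
    rw [hqsθ] at hJs
    linarith [bernoulli_log_le hθ' hq]
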